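/- arXiv:2012.09416 — 2 statements merged into one kernel-verified Lean document; each statement's English description precedes it below -/
import Mathlib

section
/- For every A₀ ∈ M_n(ℂ) there exists a differentiable curve A : [0,∞) → M_n(ℂ) with A(0) = A₀ satisfying A'(t) = A(t)·[A(t), A(t)*] for all t ≥ 0. (The ODE A' = A[A,A*] has global forward-in-time solutions.) -/
/-!
STATEMENT 8: For every A₀ ∈ M_n(ℂ) there is a global forward solution of A' = A[A,A*]
with A(0) = A₀.
-/

open Matrix Set

attribute [local instance] Matrix.frobeniusSeminormedAddCommGroup
  Matrix.frobeniusNormedAddCommGroup Matrix.frobeniusNormedSpace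

/-!
The right-hand side is a `C¹` vector field on matrices, so only blow-up has to be excluded. The
squared Frobenius norm is a Lyapunov function: `A Aᴴ` and `Aᴴ A` have squares of equal trace, which
turns `d/dt ‖A‖² = 2 Re tr(Aᴴ A [A, Aᴴ])` into `-‖[A, Aᴴ]‖² ≤ 0`. Cutting the field off outside a
ball containing the sublevel set of the initial matrix makes it compactly supported, hence complete,
and the forward trajectory stays in the region where nothing was changed.
-/

open scoped Manifold NNReal RealInnerProductSpace

section IntegralCurves

variable {E : Type*} [NormedAddCommGroup E] [NormedSpace ℝ E] {f : E → E} {K : ℝ≥0}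

theorem exists_isIntegralCurveOn_Ioo_of_lipschitzWith [CompleteSpace E] (hf : LipschitzWith K f)
    (x₀ : E) :
    ∃ α : ℝ → E, α 0 = x₀ ∧
      IsIntegralCurveOn α (fun _ ↦ f) (Ioo (-(K + 1 : ℝ)⁻¹) (K + 1)⁻¹) := by
  have hT : 0 < (K + 1 : ℝ)⁻¹ := by positivity
  -- The speed is at most `(K + 1) * ‖f x₀‖` on the ball of radius `‖f x₀‖` about `x₀`, so the time
  -- needed to leave this ball is bounded below independently of `x₀`.
  have hPL : IsPicardLindelof (fun _ ↦ f)
      (⟨0, by linarith, hT.le⟩ : Icc (-(K + 1 : ℝ)⁻¹) (K + 1)⁻¹) x₀ ‖f x₀‖₊ 0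
      ((K + 1) * ‖f x₀‖₊) K :=
    { lipschitzOnWith := fun _ _ ↦ hf.lipschitzOnWith
      continuousOn := fun _ _ ↦ continuousOn_const
      norm_le := fun _ _ x hx ↦ by
        have hdist : ‖x - x₀‖ ≤ ‖f x₀‖ := mem_closedBall_iff_norm.mp hx
        calc ‖f x‖ ≤ ‖f x₀‖ + ‖f x - f x₀‖ := norm_le_norm_add_norm_sub' _ _
          _ ≤ ‖f x₀‖ + K * ‖f x₀‖ := by grw [hf.norm_sub_le, hdist]
          _ = ((K + 1) * ‖f x₀‖₊ : ℝ≥0) := by push_cast; ring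
      mul_max_le := by
        push_cast
        rw [sub_zero, zero_sub, neg_neg, max_self, sub_zero, mul_right_comm,
          mul_inv_cancel₀ (by positivity), one_mul] }
  obtain ⟨α, hα₀, hα⟩ := hPL.exists_eq_forall_mem_Icc_hasDerivWithinAt₀
  exact ⟨α, hα₀, IsIntegralCurveOn.mono hα Ioo_subset_Icc_self⟩

theorem exists_isIntegralCurve_of_lipschitzWith_of_contDiff [CompleteSpace E]
    (hf : LipschitzWith K f) (hf' : ContDiff ℝ 1 f) (x₀ : E) :
    ∃ α : ℝ → E, α 0 = x₀ ∧ IsIntegralCurve α fun _ ↦ f := by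
  obtain ⟨α, hα₀, hα⟩ := exists_isMIntegralCurve_of_isMIntegralCurveOn (I := 𝓘(ℝ, E)) (v := f)
    (contMDiff_vectorSpace_iff_contDiff.mpr hf') (by positivity : 0 < (K + 1 : ℝ)⁻¹)
    (fun x ↦ by
      obtain ⟨α, hα₀, hα⟩ := exists_isIntegralCurveOn_Ioo_of_lipschitzWith hf x
      exact ⟨α, hα₀, fun t ht ↦ (hα t ht).hasFDerivWithinAt.hasMFDerivWithinAt⟩) x₀
  exact ⟨α, hα₀, fun t ↦ (hα t).hasFDerivAt⟩

variable [FiniteDimensional ℝ E]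

theorem exists_isIntegralCurve_of_hasCompactSupport (hf : ContDiff ℝ 1 f)
    (hf_supp : HasCompactSupport f) (x₀ : E) :
    ∃ α : ℝ → E, α 0 = x₀ ∧ IsIntegralCurve α fun _ ↦ f := by
  have : CompleteSpace E := FiniteDimensional.complete ℝ E
  obtain ⟨K, hK⟩ := hf.lipschitzWith_of_hasCompactSupport hf_supp one_ne_zero
  exact exists_isIntegralCurve_of_lipschitzWith_of_contDiff hK hf x₀

theorem exists_isIntegralCurveOn_Ici_of_lyapunov (hf : ContDiff ℝ 1 f) {V : E → ℝ}
    (hV : Differentiable ℝ V) (hVf : ∀ x, fderiv ℝ V x (f x) ≤ 0) {x₀ : E}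
    (hVb : Bornology.IsBounded {x | V x ≤ V x₀}) :
    ∃ α : ℝ → E, α 0 = x₀ ∧ IsIntegralCurveOn α (fun _ ↦ f) (Ici 0) := by
  obtain ⟨R, hR₀, hR⟩ := hVb.subset_closedBall_lt 0 0
  let χ : ContDiffBump (0 : E) := ⟨R, R + 1, hR₀, lt_add_one R⟩
  obtain ⟨α, hα₀, hα⟩ := exists_isIntegralCurve_of_hasCompactSupport
    (f := fun x ↦ χ x • f x) (χ.contDiff.smul hf) χ.hasCompactSupport.smul_right x₀
  have hanti : Antitone (V ∘ α) := by
    refine antitone_of_hasDerivAt_nonpos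
      (fun t ↦ (hV (α t)).hasFDerivAt.comp_hasDerivAt t (hα t)) fun t ↦ ?_
    rw [map_smul]
    exact mul_nonpos_of_nonneg_of_nonpos χ.nonneg (hVf (α t))
  refine ⟨α, hα₀, fun t ht ↦ ?_⟩
  have hmem : α t ∈ Metric.closedBall 0 R := hR (by simpa [hα₀] using hanti ht)
  simpa [χ.one_of_mem_closedBall hmem] using (hα t).hasDerivWithinAt (s := Ici 0)

end IntegralCurves

theorem exists_isIntegralCurveOn_Ici_of_inner_nonpos {E : Type*} [NormedAddCommGroup E]
    [InnerProductSpace ℝ E] [FiniteDimensional ℝ E] {f : E → E} (hf : ContDiff ℝ 1 f)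
    (hf_inner : ∀ x, ⟪x, f x⟫ ≤ 0) (x₀ : E) :
    ∃ α : ℝ → E, α 0 = x₀ ∧ IsIntegralCurveOn α (fun _ ↦ f) (Ici 0) := by
  refine exists_isIntegralCurveOn_Ici_of_lyapunov (V := fun x ↦ ‖x‖ ^ 2) hf
    (contDiff_norm_sq ℝ (n := 1)).differentiable_one (fun x ↦ ?_) ?_
  · rw [fderiv_norm_sq_apply]
    exact nsmul_nonpos (hf_inner x) 2
  · refine (Metric.isBounded_closedBall (x := 0) (r := ‖x₀‖)).subset fun x hx ↦ ?_
    simpa [sq_le_sq₀] using hx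

theorem trace_commutator_mul_self {n R : Type*} [Fintype n] [CommRing R] (A B : Matrix n n R) :
    ((A * B - B * A) * (A * B - B * A)).trace = -2 * (B * A * (A * B - B * A)).trace := by
  have hsq : (A * B * (A * B)).trace = (B * A * (B * A)).trace := by
    rw [Matrix.mul_assoc, trace_mul_comm]
    simp only [Matrix.mul_assoc]
  have hcross : (A * B * (B * A)).trace = (B * A * (A * B)).trace := trace_mul_comm _ _
  simp only [Matrix.mul_sub, Matrix.sub_mul, trace_sub, hsq, hcross]
  ring

section Frobenius

variable {m n 𝕜 : Type*} [Fintype m] [Fintype n] [RCLike 𝕜]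

theorem frobenius_norm_sq (A : Matrix m n 𝕜) : ‖A‖ ^ 2 = ∑ i, ∑ j, ‖A i j‖ ^ 2 := by
  simp only [frobenius_norm_def, Real.rpow_ofNat]
  rw [← Real.sqrt_eq_rpow, Real.sq_sqrt (by positivity)]

/-- The real inner product `⟪A, B⟫ = Re tr(Aᴴ B)` inducing the Frobenius norm, used to differentiate
`‖A‖²`. It is real, also for complex matrices, because conjugate transposition is only
real-differentiable; its norm structure is the existing Frobenius one. -/
noncomputable abbrev frobeniusInnerProductSpace : InnerProductSpace ℝ (Matrix m n 𝕜) where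
  inner A B := RCLike.re (Aᴴ * B).trace
  norm_sq_eq_re_inner A := by
    rw [frobenius_norm_sq, Finset.sum_comm]
    simp [trace, mul_apply, RCLike.norm_sq_eq_def]
  conj_inner_symm A B := by
    rw [← conjTranspose_conjTranspose (Bᴴ * A), trace_conjTranspose]
    simp
  add_left A B C := by simp [Matrix.add_mul]
  smul_left A B r := by simp [RCLike.smul_re]

attribute [local instance] frobeniusInnerProductSpace

theorem frobenius_inner_def (A B : Matrix m n 𝕜) : ⟪A, B⟫ = RCLike.re (Aᴴ * B).trace :=
  rfl

theorem two_mul_inner_mul_commutator_conjTranspose (A : Matrix n n 𝕜) :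
    2 * ⟪A, A * (A * Aᴴ - Aᴴ * A)⟫ = -‖A * Aᴴ - Aᴴ * A‖ ^ 2 := by
  have hsa : (A * Aᴴ - Aᴴ * A)ᴴ = A * Aᴴ - Aᴴ * A := by simp
  have h := congrArg RCLike.re (trace_commutator_mul_self A Aᴴ)
  rw [← real_inner_self_eq_norm_sq, frobenius_inner_def, frobenius_inner_def, hsa, h,
    Matrix.mul_assoc]
  simp

theorem contDiff_mul_commutator_conjTranspose {k : WithTop ℕ∞} :
    ContDiff ℝ k fun A : Matrix n n 𝕜 ↦ A * (A * Aᴴ - Aᴴ * A) := by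
  classical
  let := frobeniusNormedRing (m := n) (α := 𝕜)
  let := frobeniusNormedAlgebra (m := n) (α := 𝕜) (R := ℝ)
  have hconj : ContDiff ℝ k fun A : Matrix n n 𝕜 ↦ Aᴴ :=
    (conjTransposeLinearEquiv n n ℝ 𝕜).toLinearMap.toContinuousLinearMap.contDiff
  exact contDiff_id.mul ((contDiff_id.mul hconj).sub (hconj.mul contDiff_id))

theorem stmt8_general (A₀ : Matrix n n 𝕜) :
    ∃ A : ℝ → Matrix n n 𝕜, A 0 = A₀ ∧
      ∀ t ∈ Ici (0 : ℝ),
        HasDerivWithinAt A (A t * (A t * (A t)ᴴ - (A t)ᴴ * A t)) (Ici 0) t := by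
  refine exists_isIntegralCurveOn_Ici_of_inner_nonpos contDiff_mul_commutator_conjTranspose
    (fun A ↦ ?_) A₀
  linarith [two_mul_inner_mul_commutator_conjTranspose A, sq_nonneg ‖A * Aᴴ - Aᴴ * A‖]

end Frobenius

theorem stmt8 {n : ℕ} (A₀ : Matrix (Fin n) (Fin n) ℂ) :
    ∃ A : ℝ → Matrix (Fin n) (Fin n) ℂ, A 0 = A₀ ∧
      ∀ t ∈ Ici (0 : ℝ),
        HasDerivWithinAt A (A t * (A t * (A t)ᴴ - (A t)ᴴ * A t)) (Ici 0) t :=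
  stmt8_general A₀
end

section
/- Suppose A : [0,∞) → M_n(ℂ) is differentiable and satisfies A'(t) = A(t)·[A(t), A(t)*] for all t ≥ 0. If t_k → ∞ is a sequence of times such that A(t_k) converges to some A_∞ ∈ M_n(ℂ), then A_∞ is normal. Moreover, if s_k → ∞ is another sequence with A(s_k) → A'_∞, then there exists a unitary matrix U ∈ M_n(ℂ) with A'_∞ = U A_∞ U*; i.e. all subsequential limits of the flow lie in a single unitary conjugation orbit of normal matrices. -/
/-!
STATEMENT 9: If A : [0,∞) → M_n(ℂ) solves A' = A[A,A*] and A(t_k) → A∞ along some t_k → ∞,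
then A∞ is normal; and any two subsequential limits are unitarily conjugate.
-/

open Matrix Set Filter

attribute [local instance] Matrix.frobeniusSeminormedAddCommGroup
  Matrix.frobeniusNormedAddCommGroup Matrix.frobeniusNormedSpace

/-!
Put `C = [A, A*]`. Since `C` is Hermitian and `tr ((AA* + A*A) C) = 0`, the flow dissipates
`‖A‖² = tr (A*A)` at the rate `‖C‖²`. Hence `A` stays bounded, and Barbălat's lemma gives
`[A, A*] → 0`, so every limit is normal. On the other hand `A C = [A, A A*]` puts the flow in Lax
form, so every `tr (A ^ k)` is conserved. The numbers `tr (L ^ k)` therefore agree for all limits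
`L`; they determine the eigenvalues of `L` with multiplicity, and a normal matrix is determined up
to unitary conjugation by its eigenvalues.
-/

open Topology
open Module.End (eigenspace mem_eigenspace_iff)
open scoped ComplexConjugate

section NormalOperators

theorem isStarNormal_sub_smul_one {S R : Type*} [CommRing S] [StarRing S] [Ring R] [StarRing R]
    [Algebra S R] [StarModule S R] {a : R} (ha : IsStarNormal a) (c : S) :
    IsStarNormal (a - c • 1) := by
  refine ⟨?_⟩
  rw [star_sub, star_smul, star_one]
  have hc (x : R) (z : S) : Commute x (z • 1) := (Commute.one_right x).smul_right z
  exact (ha.star_comm_self.sub_right (hc _ _)).sub_left ((hc _ _).symm)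

section RCLike

variable {𝕜 E : Type*} [RCLike 𝕜] [NormedAddCommGroup E] [InnerProductSpace 𝕜 E] [CompleteSpace E]
  {T : E →L[𝕜] E}

theorem eigenspace_adjoint_conj (hT : IsStarNormal T) (μ : 𝕜) :
    eigenspace (ContinuousLinearMap.adjoint T).toLinearMap (conj μ) =
      eigenspace T.toLinearMap μ := by
  ext x
  have h := ContinuousLinearMap.IsStarNormal.adjoint_apply_eq_zero_iff
    (isStarNormal_sub_smul_one hT μ) x
  simpa [← ContinuousLinearMap.star_eq_adjoint, sub_eq_zero, mem_eigenspace_iff] using h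

theorem orthogonalFamily_eigenspaces_of_isStarNormal (hT : IsStarNormal T) :
    OrthogonalFamily 𝕜 (fun μ => eigenspace T.toLinearMap μ)
      fun μ => (eigenspace T.toLinearMap μ).subtypeₗᵢ := by
  rintro μ ν hμν ⟨v, hv⟩ ⟨w, hw⟩
  rw [← eigenspace_adjoint_conj hT, mem_eigenspace_iff] at hv
  rw [mem_eigenspace_iff] at hw
  have h := T.adjoint_inner_left w v
  simp only [ContinuousLinearMap.coe_coe] at hv hw
  rw [hv, hw, inner_smul_left, inner_smul_right, RCLike.conj_conj, ← sub_eq_zero, ← sub_mul] at h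
  exact (mul_eq_zero.mp h).resolve_left (sub_ne_zero.mpr hμν)

theorem mapsTo_orthogonal_iSup_eigenspace (hT : IsStarNormal T) :
    ∀ x ∈ (⨆ μ, eigenspace T.toLinearMap μ)ᗮ, T x ∈ (⨆ μ, eigenspace T.toLinearMap μ)ᗮ := by
  simp only [← Submodule.iInf_orthogonal, Submodule.mem_iInf, Submodule.mem_orthogonal]
  intro x hx μ v hv
  have hv' := hv
  rw [← eigenspace_adjoint_conj hT, mem_eigenspace_iff] at hv'
  rw [← ContinuousLinearMap.adjoint_inner_left]
  simp only [ContinuousLinearMap.coe_coe] at hv'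
  rw [hv', inner_smul_left, hx μ v hv, mul_zero]

end RCLike

variable {E : Type*} [NormedAddCommGroup E] [InnerProductSpace ℂ E] [FiniteDimensional ℂ E]
  [CompleteSpace E] {T : E →L[ℂ] E}

theorem orthogonal_iSup_eigenspace_eq_bot (hT : IsStarNormal T) :
    (⨆ μ, eigenspace T.toLinearMap μ)ᗮ = ⊥ := by
  set p := (⨆ μ, eigenspace T.toLinearMap μ)ᗮ
  by_contra hne
  have : Nontrivial p := Submodule.nontrivial_iff_ne_bot.mpr hne
  obtain ⟨μ, hμ⟩ :=
    Module.End.exists_eigenvalue (T.toLinearMap.restrict (mapsTo_orthogonal_iSup_eigenspace hT))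
  have hortho : eigenspace T.toLinearMap μ ⟂ p :=
    (Submodule.isOrtho_orthogonal_right _).mono_left (le_iSup _ μ)
  exact hμ (Module.End.eigenspace_restrict_eq_bot _ hortho.disjoint)

theorem exists_orthonormalBasis_eigenvectors {ι : Type*} [Fintype ι] (hT : IsStarNormal T)
    (hι : Module.finrank ℂ E = Fintype.card ι) :
    ∃ (b : OrthonormalBasis ι ℂ E) (d : ι → ℂ), ∀ i, T (b i) = d i • b i := by
  classical
  have hfam : OrthogonalFamily ℂ (fun μ : Module.End.Eigenvalues T.toLinearMap =>
      eigenspace T.toLinearMap μ.val) fun μ => (eigenspace T.toLinearMap μ.val).subtypeₗᵢ :=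
    (orthogonalFamily_eigenspaces_of_isStarNormal hT).comp Subtype.coe_injective
  have hint : DirectSum.IsInternal fun μ : Module.End.Eigenvalues T.toLinearMap =>
      eigenspace T.toLinearMap μ.val := by
    rw [hfam.isInternal_iff, ← orthogonal_iSup_eigenspace_eq_bot hT]
    exact congrArg _ (iSup_ne_bot_subtype _)
  let e := Fintype.equivFin ι
  let d (i : ι) := hint.subordinateOrthonormalBasisIndex hι (e i) hfam
  refine ⟨(hint.subordinateOrthonormalBasis hι hfam).reindex e.symm, fun i => (d i).val,
    fun i => ?_⟩
  rw [OrthonormalBasis.reindex_apply]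
  exact mem_eigenspace_iff.mp (hint.subordinateOrthonormalBasis_subordinate hι (e i) hfam)

end NormalOperators

section NormalMatrices

variable {ι : Type*} [Fintype ι]

theorem exists_perm_comp_eq_of_sum_pow_eq {R : Type*} [CommRing R] [IsDomain R] [CharZero R]
    {d e : ι → R} (h : ∀ k : ℕ, ∑ i, d i ^ k = ∑ i, e i ^ k) :
    ∃ σ : Equiv.Perm ι, d ∘ σ = e := by
  classical
  -- Distinct scalars give distinct characters `k ↦ z ^ k` of `ℕ`, and these are independent.
  let χ (c : ι → R) : (Multiplicative ℕ →* R) →₀ R := ∑ i, Finsupp.single (powersHom R (c i)) 1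
  have hχ : χ d = χ e := by
    refine linearIndependent_monoidHom (Multiplicative ℕ) R (funext fun k => ?_)
    simpa [χ] using h k.toAdd
  have hcount (c : ι → R) (z : R) : χ c (powersHom R z) = Fintype.card {i // c i = z} := by
    simp [χ, Finsupp.single_apply, Fintype.card_subtype]
  have hcard (z : R) : Fintype.card {i // e i = z} = Fintype.card {i // d i = z} :=
    Nat.cast_injective (R := R) <| by rw [← hcount, ← hcount, hχ]
  exact ⟨Equiv.ofFiberEquiv fun z => Fintype.equivOfCardEq (hcard z),
    funext (Equiv.ofFiberEquiv_map _)⟩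

variable [DecidableEq ι]

theorem permMatrix_mem_unitaryGroup {R : Type*} [CommRing R] [StarRing R] (σ : Equiv.Perm ι) :
    σ.permMatrix R ∈ unitaryGroup ι R := by
  rw [mem_unitaryGroup_iff, star_eq_conjTranspose, conjTranspose_permMatrix, ← permMatrix_mul,
    inv_mul_cancel, permMatrix_one]

theorem exists_conjStarAlgAut_diagonal_eq_of_isStarNormal {M : Matrix ι ι ℂ}
    (hM : IsStarNormal M) : ∃ (V : unitaryGroup ι ℂ) (d : ι → ℂ),
      Unitary.conjStarAlgAut ℂ _ V (diagonal d) = M := by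
  obtain ⟨b, d, hb⟩ := exists_orthonormalBasis_eigenvectors
    (hM.map (toEuclideanCLM (n := ι) (𝕜 := ℂ)) M) finrank_euclideanSpace
  let V : unitaryGroup ι ℂ :=
    ⟨_, (EuclideanSpace.basisFun ι ℂ).toMatrix_orthonormalBasis_mem_unitary b⟩
  have hV : (V : Matrix ι ι ℂ) * diagonal d = M * V := by
    ext i j
    rw [mul_diagonal]
    simpa [V, Matrix.mul_apply, Module.Basis.toMatrix_apply, mulVec, dotProduct, mul_comm, eq_comm]
      using congrFun (congrArg WithLp.ofLp (hb j)) i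
  refine ⟨V, d, ?_⟩
  rw [Unitary.conjStarAlgAut_apply, hV, mul_assoc, mem_unitaryGroup_iff.mp V.2, mul_one]

theorem trace_conjStarAlgAut {R : Type*} [CommRing R] [StarRing R] (V : unitaryGroup ι R)
    (M : Matrix ι ι R) : (Unitary.conjStarAlgAut R _ V M).trace = M.trace := by
  rw [Unitary.conjStarAlgAut_apply, trace_mul_cycle, Unitary.coe_star_mul_self, one_mul]

theorem conjStarAlgAut_permMatrix_diagonal {R : Type*} [CommRing R] [StarRing R]
    (σ : Equiv.Perm ι) (d : ι → R) :
    Unitary.conjStarAlgAut R _ ⟨σ.permMatrix R, permMatrix_mem_unitaryGroup σ⟩ (diagonal d) =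
      diagonal (d ∘ σ) := by
  rw [Unitary.conjStarAlgAut_apply, star_eq_conjTranspose, conjTranspose_permMatrix,
    PEquiv.toMatrix_toPEquiv_mul, PEquiv.mul_toMatrix_toPEquiv, submatrix_submatrix]
  exact submatrix_diagonal d σ σ.injective

theorem exists_conjStarAlgAut_eq_of_trace_pow_eq {M N : Matrix ι ι ℂ} (hM : IsStarNormal M)
    (hN : IsStarNormal N) (h : ∀ k : ℕ, (M ^ k).trace = (N ^ k).trace) :
    ∃ U : unitaryGroup ι ℂ, Unitary.conjStarAlgAut ℂ _ U M = N := by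
  obtain ⟨V, d, rfl⟩ := exists_conjStarAlgAut_diagonal_eq_of_isStarNormal hM
  obtain ⟨W, e, rfl⟩ := exists_conjStarAlgAut_diagonal_eq_of_isStarNormal hN
  simp only [← map_pow, trace_conjStarAlgAut, diagonal_pow, trace_diagonal, Pi.pow_apply] at h
  obtain ⟨σ, rfl⟩ := exists_perm_comp_eq_of_sum_pow_eq h
  refine ⟨W * ⟨σ.permMatrix ℂ, permMatrix_mem_unitaryGroup σ⟩ * V⁻¹, ?_⟩
  rw [← conjStarAlgAut_permMatrix_diagonal, ← Unitary.conjStarAlgAut_mul_apply,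
    ← Unitary.conjStarAlgAut_mul_apply, inv_mul_cancel_right]

end NormalMatrices

section Asymptotics

theorem exists_tendsto_atTop_of_antitoneOn_Ici {f : ℝ → ℝ} {a : ℝ} (hf : AntitoneOn f (Ici a))
    (hb : BddBelow (f '' Ici a)) : ∃ l, Tendsto f atTop (𝓝 l) := by
  rw [image_eq_range] at hb
  exact ⟨_, tendsto_comp_val_Ici_atTop.mp
    (tendsto_atTop_ciInf (antitoneOn_iff_antitone.mp hf) hb)⟩

theorem eq_of_mapClusterPt_of_tendsto_comp {α X Y : Type*} [TopologicalSpace X]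
    [TopologicalSpace Y] [T2Space Y] {l : Filter α} {u : α → X} {g : X → Y} {x : X} {y : Y}
    (hx : MapClusterPt x l u) (hg : ContinuousAt g x) (hy : Tendsto (g ∘ u) l (𝓝 y)) : g x = y :=
  eq_of_nhds_neBot ((hx.continuousAt_comp hg).clusterPt.mono hy)

variable {E F : Type*} [NormedAddCommGroup E] [NormedSpace ℝ E]
  [NormedAddCommGroup F] [NormedSpace ℝ F] {a : ℝ}

theorem norm_image_sub_sub_smul_le {f f' : ℝ → F} {s : Set ℝ} {x y C : ℝ} {w : F}
    (hs : Convex ℝ s) (hf : ∀ t ∈ s, HasDerivWithinAt f (f' t) s t)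
    (hC : ∀ t ∈ s, ‖f' t - w‖ ≤ C) (hx : x ∈ s) (hy : y ∈ s) :
    ‖f y - f x - (y - x) • w‖ ≤ C * ‖y - x‖ := by
  have h := hs.norm_image_sub_le_of_norm_hasDerivWithin_le (f := fun t => f t - t • w)
    (fun t ht => (hf t ht).sub ((hasDerivWithinAt_id t s).smul_const w)) (by simpa using hC) hx hy
  rwa [sub_sub_sub_comm, ← sub_smul] at h

-- Barbălat's lemma: over a step of length `δ` on which the derivative barely varies, the increment
-- `f (t + δ) - f t → 0` is close to `δ • f' t`.
theorem tendsto_deriv_zero_of_uniformContinuousOn {f f' : ℝ → F} {l : F}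
    (hf : ∀ t ∈ Ici a, HasDerivWithinAt f (f' t) (Ici a) t) (hl : Tendsto f atTop (𝓝 l))
    (hf' : UniformContinuousOn f' (Ici a)) : Tendsto f' atTop (𝓝 0) := by
  rw [Metric.tendsto_nhds]
  intro ε hε
  obtain ⟨δ, hδ, hclose⟩ := Metric.uniformContinuousOn_iff_le.mp hf' (ε / 2) (half_pos hε)
  have hincr : Tendsto (fun t => ‖f (t + δ) - f t‖) atTop (𝓝 0) := by
    simpa using ((hl.comp (tendsto_atTop_add_const_right _ δ tendsto_id)).sub hl).norm
  filter_upwards [eventually_ge_atTop a, hincr.eventually_lt_const (mul_pos (half_pos hε) hδ)]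
    with t hta hsmall
  have hlin : ‖f (t + δ) - f t - δ • f' t‖ ≤ ε / 2 * δ := by
    have hsub : Icc t (t + δ) ⊆ Ici a := fun s hs => hta.trans hs.1
    have hvar (s : ℝ) (hs : s ∈ Icc t (t + δ)) : ‖f' s - f' t‖ ≤ ε / 2 := by
      rw [← dist_eq_norm]
      refine hclose s (hsub hs) t hta ?_
      rw [Real.dist_eq, abs_of_nonneg (sub_nonneg.mpr hs.1)]
      linarith [hs.2]
    simpa [abs_of_pos hδ] using norm_image_sub_sub_smul_le (convex_Icc t (t + δ))
      (fun s hs => (hf s (hsub hs)).mono hsub) hvar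
      (left_mem_Icc.mpr (by linarith)) (right_mem_Icc.mpr (by linarith))
  have hstep : δ * ‖f' t‖ < δ * ε :=
    calc δ * ‖f' t‖ = ‖δ • f' t‖ := by rw [norm_smul, Real.norm_of_nonneg hδ.le]
      _ ≤ ‖f (t + δ) - f t‖ + ‖f (t + δ) - f t - δ • f' t‖ := norm_le_norm_add_norm_sub _ _
      _ < ε / 2 * δ + ε / 2 * δ := add_lt_add_of_lt_of_le hsmall hlin
      _ = δ * ε := by ring
  rw [dist_zero_right]
  exact lt_of_mul_lt_mul_left hstep hδ.le

variable [ProperSpace E] {x : ℝ → E} {v : E → E}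

theorem uniformContinuousOn_of_isBounded_orbit
    (hx : ∀ t ∈ Ici a, HasDerivWithinAt x (v (x t)) (Ici a) t) (hv : Continuous v)
    (hb : Bornology.IsBounded (x '' Ici a)) : UniformContinuousOn x (Ici a) := by
  obtain ⟨C, hC⟩ := (hb.isCompact_closure.image hv).isBounded.exists_norm_le
  have hspeed (t : ℝ) (ht : t ∈ Ici a) : ‖v (x t)‖ ≤ C :=
    hC _ (mem_image_of_mem v (subset_closure (mem_image_of_mem x ht)))
  exact ((convex_Ici a).lipschitzOnWith_of_nnnorm_hasDerivWithin_le (C := C.toNNReal) hx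
    fun t ht => NNReal.coe_le_coe.mp ((hspeed t ht).trans C.le_coe_toNNReal)).uniformContinuousOn

theorem tendsto_zero_of_isBounded_orbit {W : E → F} {φ : ℝ → F} {l : F}
    (hx : ∀ t ∈ Ici a, HasDerivWithinAt x (v (x t)) (Ici a) t) (hv : Continuous v)
    (hb : Bornology.IsBounded (x '' Ici a)) (hW : Continuous W)
    (hφ : ∀ t ∈ Ici a, HasDerivWithinAt φ (W (x t)) (Ici a) t) (hl : Tendsto φ atTop (𝓝 l)) :
    Tendsto (W ∘ x) atTop (𝓝 0) := by
  refine tendsto_deriv_zero_of_uniformContinuousOn hφ hl ?_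
  exact (hb.isCompact_closure.uniformContinuousOn_of_continuous hW.continuousOn).comp
    (uniformContinuousOn_of_isBounded_orbit hx hv hb)
    fun t ht => subset_closure (mem_image_of_mem x ht)

end Asymptotics

section MatrixCalculus

variable {𝕜 ι : Type*} [RCLike 𝕜] [Fintype ι] {A B : ℝ → Matrix ι ι 𝕜}
  {A' B' : Matrix ι ι 𝕜} {s : Set ℝ} {t : ℝ}

theorem hasDerivWithinAt_matrix_mul (hA : HasDerivWithinAt A A' s t)
    (hB : HasDerivWithinAt B B' s t) :
    HasDerivWithinAt (fun t => A t * B t) (A' * B t + A t * B') s t := by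
  classical
  let : NormedRing (Matrix ι ι 𝕜) := frobeniusNormedRing
  let : NormedAlgebra ℝ (Matrix ι ι 𝕜) := frobeniusNormedAlgebra
  exact hA.mul hB

theorem hasDerivWithinAt_matrix_trace (hA : HasDerivWithinAt A A' s t) :
    HasDerivWithinAt (fun t => (A t).trace) A'.trace s t :=
  (traceLinearMap ι ℝ 𝕜).toContinuousLinearMap.hasFDerivAt.comp_hasDerivWithinAt t hA

theorem frobenius_norm_sq_eq_re_trace {m n : Type*} [Fintype m] [Fintype n] (M : Matrix m n 𝕜) :
    ‖M‖ ^ 2 = RCLike.re (Mᴴ * M).trace := by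
  rw [frobenius_norm_def, ← Real.sqrt_eq_rpow, Real.sq_sqrt (by positivity), Finset.sum_comm]
  simp [trace, Matrix.mul_apply, RCLike.norm_sq_eq_def]

theorem hasDerivWithinAt_frobenius_norm_sq (hA : HasDerivWithinAt A A' s t) :
    HasDerivWithinAt (fun t => ‖A t‖ ^ 2) (RCLike.re (A'ᴴ * A t + (A t)ᴴ * A').trace) s t := by
  simp only [frobenius_norm_sq_eq_re_trace]
  exact RCLike.reCLM.hasFDerivAt.comp_hasDerivWithinAt t
    (hasDerivWithinAt_matrix_trace (hasDerivWithinAt_matrix_mul hA.star hA))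

variable [DecidableEq ι]

theorem hasDerivWithinAt_pow_of_lax {H : Matrix ι ι 𝕜}
    (hA : HasDerivWithinAt A ⁅A t, H⁆ s t) (k : ℕ) :
    HasDerivWithinAt (fun t => A t ^ k) ⁅A t ^ k, H⁆ s t := by
  induction k with
  | zero =>
    simp only [pow_zero, Ring.lie_def, Matrix.one_mul, Matrix.mul_one, sub_self]
    exact hasDerivWithinAt_const t s 1
  | succ k ih =>
    simp only [pow_succ]
    convert hasDerivWithinAt_matrix_mul ih hA using 1
    simp only [Ring.lie_def]
    noncomm_ring

theorem trace_pow_eq_of_lax {H : ℝ → Matrix ι ι 𝕜} {a b : ℝ}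
    (hA : ∀ t ∈ Ici a, HasDerivWithinAt A ⁅A t, H t⁆ (Ici a) t) (k : ℕ) (hab : a ≤ b) :
    (A b ^ k).trace = (A a ^ k).trace := by
  have hderiv (t : ℝ) (ht : t ∈ Ici a) :
      HasDerivWithinAt (fun t => (A t ^ k).trace) 0 (Ici a) t := by
    convert hasDerivWithinAt_matrix_trace (hasDerivWithinAt_pow_of_lax (hA t ht) k) using 1
    rw [Ring.lie_def, trace_sub, trace_mul_comm, sub_self]
  exact constant_of_has_deriv_right_zero
    (fun t ht => (hderiv t ht.1).continuousWithinAt.mono Icc_subset_Ici_self)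
    (fun t ht => (hderiv t ht.1).mono (Ici_subset_Ici.mpr ht.1)) b (right_mem_Icc.mpr hab)

end MatrixCalculus

section SelfCommutatorFlow

variable {𝕜 ι : Type*} [RCLike 𝕜] [Fintype ι]

/-- The self-commutator `[M, M*]`, which measures the failure of `M` to be normal. -/
def selfCommutator (M : Matrix ι ι 𝕜) : Matrix ι ι 𝕜 := M * Mᴴ - Mᴴ * M

theorem selfCommutator_eq_zero_iff {M : Matrix ι ι 𝕜} : selfCommutator M = 0 ↔ IsStarNormal M := by
  rw [selfCommutator, sub_eq_zero, isStarNormal_iff, commute_iff_eq, eq_comm, star_eq_conjTranspose]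

theorem conjTranspose_selfCommutator (M : Matrix ι ι 𝕜) :
    (selfCommutator M)ᴴ = selfCommutator M := by
  simp [selfCommutator]

theorem continuous_selfCommutator : Continuous (selfCommutator (𝕜 := 𝕜) (ι := ι)) := by
  have : Continuous fun M : Matrix ι ι 𝕜 => Mᴴ := continuous_star
  unfold selfCommutator
  fun_prop

theorem two_mul_trace_conjTranspose_mul_self_mul_selfCommutator (M : Matrix ι ι 𝕜) :
    2 * (Mᴴ * M * selfCommutator M).trace = -(selfCommutator M * selfCommutator M).trace := by
  have hsq : (Mᴴ * M * (Mᴴ * M)).trace = (M * Mᴴ * (M * Mᴴ)).trace := by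
    rw [mul_assoc, trace_mul_comm, mul_assoc, mul_assoc, mul_assoc]
  have hcomm := trace_mul_comm (M * Mᴴ) (Mᴴ * M)
  simp only [selfCommutator, mul_sub, sub_mul, trace_sub]
  linear_combination -hcomm - hsq

/-- Solutions on `[0, ∞)` of the flow `A' = A [A, A*]`, with the one-sided derivative at `0`. -/
def IsSelfCommutatorFlow (A : ℝ → Matrix ι ι 𝕜) : Prop :=
  ∀ t ∈ Ici (0 : ℝ), HasDerivWithinAt A (A t * selfCommutator (A t)) (Ici 0) t

namespace IsSelfCommutatorFlow

variable {A : ℝ → Matrix ι ι 𝕜} {L : Matrix ι ι 𝕜}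

theorem hasDerivWithinAt_norm_sq (hA : IsSelfCommutatorFlow A) {t : ℝ} (ht : t ∈ Ici (0 : ℝ)) :
    HasDerivWithinAt (fun t => ‖A t‖ ^ 2) (-‖selfCommutator (A t)‖ ^ 2) (Ici 0) t := by
  have htrace (M C : Matrix ι ι 𝕜) (hC : Cᴴ = C) :
      ((M * C)ᴴ * M + Mᴴ * (M * C)).trace = 2 * (Mᴴ * M * C).trace := by
    rw [conjTranspose_mul, hC, trace_add, mul_assoc, trace_mul_comm C, mul_assoc, two_mul]
  refine (hasDerivWithinAt_frobenius_norm_sq (hA t ht)).congr_deriv ?_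
  rw [htrace _ _ (conjTranspose_selfCommutator _),
    two_mul_trace_conjTranspose_mul_self_mul_selfCommutator, map_neg,
    frobenius_norm_sq_eq_re_trace, conjTranspose_selfCommutator]

theorem antitoneOn_norm_sq (hA : IsSelfCommutatorFlow A) :
    AntitoneOn (fun t => ‖A t‖ ^ 2) (Ici 0) :=
  antitoneOn_of_hasDerivWithinAt_nonpos (convex_Ici 0)
    (fun _ ht => (hA.hasDerivWithinAt_norm_sq ht).continuousWithinAt)
    (fun _ ht => (hA.hasDerivWithinAt_norm_sq (interior_subset ht)).mono interior_subset)
    fun _ _ => neg_nonpos.mpr (sq_nonneg _)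

theorem isBounded_image (hA : IsSelfCommutatorFlow A) : Bornology.IsBounded (A '' Ici 0) :=
  isBounded_iff_forall_norm_le.mpr ⟨‖A 0‖, forall_mem_image.mpr fun _ ht =>
    le_of_sq_le_sq (hA.antitoneOn_norm_sq self_mem_Ici ht ht) (norm_nonneg _)⟩

theorem tendsto_selfCommutator_zero (hA : IsSelfCommutatorFlow A) :
    Tendsto (selfCommutator ∘ A) atTop (𝓝 0) := by
  obtain ⟨l, hl⟩ := exists_tendsto_atTop_of_antitoneOn_Ici hA.antitoneOn_norm_sq
    ⟨0, forall_mem_image.mpr fun _ _ => sq_nonneg _⟩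
  have h := tendsto_zero_of_isBounded_orbit (v := fun M => M * selfCommutator M) hA
    (continuous_id.matrix_mul continuous_selfCommutator) hA.isBounded_image
    (W := fun M => -‖selfCommutator M‖ ^ 2)
    (continuous_selfCommutator.norm.pow 2).neg (fun _ ht => hA.hasDerivWithinAt_norm_sq ht) hl
  refine tendsto_zero_iff_norm_tendsto_zero.mpr ?_
  simpa [Function.comp_def] using h.neg.sqrt

theorem isStarNormal_of_mapClusterPt (hA : IsSelfCommutatorFlow A) (hL : MapClusterPt L atTop A) :
    IsStarNormal L :=
  selfCommutator_eq_zero_iff.mp <| eq_of_mapClusterPt_of_tendsto_comp hL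
    continuous_selfCommutator.continuousAt hA.tendsto_selfCommutator_zero

variable [DecidableEq ι]

theorem trace_pow_eq (hA : IsSelfCommutatorFlow A) (k : ℕ) {t : ℝ} (ht : 0 ≤ t) :
    (A t ^ k).trace = (A 0 ^ k).trace := by
  refine trace_pow_eq_of_lax (H := fun t => A t * (A t)ᴴ) (fun t ht => ?_) k ht
  convert hA t ht using 1
  rw [Ring.lie_def, selfCommutator]
  noncomm_ring

theorem trace_pow_eq_of_mapClusterPt (hA : IsSelfCommutatorFlow A) (hL : MapClusterPt L atTop A)
    (k : ℕ) : (L ^ k).trace = (A 0 ^ k).trace :=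
  eq_of_mapClusterPt_of_tendsto_comp (g := fun M => (M ^ k).trace) hL
    (continuous_pow k).matrix_trace.continuousAt <|
    tendsto_const_nhds.congr' <| (eventually_ge_atTop 0).mono fun _ ht =>
      (hA.trace_pow_eq k ht).symm

theorem exists_conjStarAlgAut_eq_of_mapClusterPt {A : ℝ → Matrix ι ι ℂ} {L L' : Matrix ι ι ℂ}
    (hA : IsSelfCommutatorFlow A) (hL : MapClusterPt L atTop A) (hL' : MapClusterPt L' atTop A) :
    ∃ U : unitaryGroup ι ℂ, Unitary.conjStarAlgAut ℂ _ U L = L' :=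
  exists_conjStarAlgAut_eq_of_trace_pow_eq (hA.isStarNormal_of_mapClusterPt hL)
    (hA.isStarNormal_of_mapClusterPt hL') fun k =>
      (hA.trace_pow_eq_of_mapClusterPt hL k).trans (hA.trace_pow_eq_of_mapClusterPt hL' k).symm

end IsSelfCommutatorFlow

end SelfCommutatorFlow

theorem stmt9 {n : ℕ} {A : ℝ → Matrix (Fin n) (Fin n) ℂ}
    (hA : ∀ t ∈ Ici (0 : ℝ),
      HasDerivWithinAt A (A t * (A t * (A t)ᴴ - (A t)ᴴ * A t)) (Ici 0) t)
    {tk sk : ℕ → ℝ} (htk : Tendsto tk atTop atTop) (hsk : Tendsto sk atTop atTop)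
    {Ainf Ainf' : Matrix (Fin n) (Fin n) ℂ}
    (h1 : Tendsto (fun k => A (tk k)) atTop (nhds Ainf))
    (h2 : Tendsto (fun k => A (sk k)) atTop (nhds Ainf')) :
    Ainf * Ainfᴴ = Ainfᴴ * Ainf ∧
      ∃ U : Matrix (Fin n) (Fin n) ℂ, U * Uᴴ = 1 ∧ Ainf' = U * Ainf * Uᴴ := by
  have hflow : IsSelfCommutatorFlow A := hA
  have hL : MapClusterPt Ainf atTop A := .of_comp htk h1.mapClusterPt
  have hL' : MapClusterPt Ainf' atTop A := .of_comp hsk h2.mapClusterPt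
  have hnormal : IsStarNormal Ainf := hflow.isStarNormal_of_mapClusterPt hL
  obtain ⟨U, hU⟩ := hflow.exists_conjStarAlgAut_eq_of_mapClusterPt hL hL'
  exact ⟨hnormal.star_comm_self.eq.symm, U, Unitary.coe_mul_star_self U, hU.symm⟩
end
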